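/- Let W♮ ∈ ℝ^{L×K} with rank(W♮) = K, and let F♮ ∈ ℝ^{K×N} be entrywise nonnegative with every column summing to 1, rank(F♮) = K, and F♮ satisfying the SSC. Set P = W♮·F♮. Call a pair (W,F) feasible if W ∈ ℝ^{L×K}, F ∈ ℝ^{K×N}, F is entrywise nonnegative with every column summing to 1, and W·F = P. If (W*,F*) is feasible and det(F*·(F*)^T) ≥ det(F·F^T) for every feasible (W,F), then there exists a permutation matrix Π ∈ ℝ^{K×K} such that W* = W♮·Π and F* = Π^T·F♮. -/

import Mathlib

open Matrix BigOperators

/-- Euclidean norm of a real vector. -/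
noncomputable def l2norm {m : Type*} [Fintype m] (x : m → ℝ) : ℝ :=
  Real.sqrt (∑ i, (x i) ^ 2)

/-- `P` is a permutation matrix. -/
def IsPermMatrix {K : ℕ} (P : Matrix (Fin K) (Fin K) ℝ) : Prop :=
  ∃ σ : Equiv.Perm (Fin K), ∀ i j, P i j = if σ i = j then 1 else 0

/-- The conic hull of the columns of `H`. -/
def coneOf {K : ℕ} {J : Type*} [Fintype J] (H : Matrix (Fin K) J ℝ) : Set (Fin K → ℝ) :=
  {x | ∃ θ : J → ℝ, (∀ j, 0 ≤ θ j) ∧ x = H.mulVec θ}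

/-- The second-order cone `C = {x : √(K-1) ‖x‖₂ ≤ ∑ᵢ xᵢ}`. -/
def socC (K : ℕ) : Set (Fin K → ℝ) :=
  {x | Real.sqrt ((K : ℝ) - 1) * l2norm x ≤ ∑ i, x i}

/-- The sufficiently scattered condition. -/
def SSC {K : ℕ} {J : Type*} [Fintype J] (H : Matrix (Fin K) J ℝ) : Prop :=
  socC K ⊆ coneOf H ∧
  ∀ Q : Matrix (Fin K) (Fin K) ℝ, Qᵀ * Q = 1 → ¬ IsPermMatrix Q → ¬ (coneOf H ⊆ coneOf Q)

/-!
The cone `C` contains `‖b‖ 1 - b` for every vector `b`, so a vector `b` that is nonnegative on `C`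
satisfies `‖b‖ ≤ ∑ bᵢ`. In particular `C` spans the whole space, hence `Fn` has full row rank, and
any factorization `W * F = Wn * Fn` comes from a change of basis `F = B * Fn`. The entries of `B`
sum to `K`, because its columns sum to one, and its rows satisfy `‖bₖ‖ ≤ sₖ := ∑ᵢ Bₖᵢ`, because
`B * Fn` is nonnegative and `C ⊆ coneOf Fn`. If the volume of `F` is at least that of `Fn`, then
Hadamard's inequality and AM-GM give `1 ≤ |det B| ≤ ∏ ‖bₖ‖ ≤ ∏ sₖ ≤ (∑ sₖ / K) ^ K = 1`. Equality
in AM-GM forces `sₖ = 1`; the eigenvalues of `B * Bᵀ` then have sum at most `K` and product at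
least one, so they all equal one and `B` is orthogonal. The second half of SSC makes `Bᵀ` a
permutation matrix.
-/

section LinearAlgebra

variable {l m n R : Type*} [Fintype m]

lemma mulVec_injective_of_rank_eq_card [Field R] {A : Matrix l m R}
    (hA : A.rank = Fintype.card m) : Function.Injective A.mulVec := by
  rw [mulVec_injective_iff, linearIndependent_iff_card_eq_finrank_span, ← hA,
    rank_eq_finrank_span_cols, Set.finrank]

lemma exists_mul_eq_one_of_vecMul_injective [Field R] [DecidableEq m] [Fintype n]
    {A : Matrix m n R} (hA : Function.Injective A.vecMul) : ∃ B : Matrix n m R, A * B = 1 := by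
  have hrank : Module.finrank R A.mulVecLin.range = Module.finrank R (m → R) := by
    rw [Module.finrank_fintype_fun_eq_card]
    exact (vecMul_injective_iff.1 hA).rank_matrix
  rw [← mulVec_surjective_iff_exists_right_inverse]
  exact LinearMap.range_eq_top.1 (Submodule.eq_top_of_finrank_eq hrank)

lemma eq_of_mul_eq_mul_of_mulVec_injective [NonUnitalSemiring R] {A : Matrix l m R}
    (hA : Function.Injective A.mulVec) {X Y : Matrix m n R} (h : A * X = A * Y) : X = Y :=
  ext_col fun j => hA (congrArg (Matrix.col · j) h)

lemma exists_eq_mul_of_mul_eq_mul [Field R] [Finite n]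
    {W W' : Matrix l m R} {F F' : Matrix m n R} (hW : Function.Injective W.mulVec)
    (hF : Function.Injective F.vecMul) (h : W' * F' = W * F) :
    ∃ B : Matrix m m R, W = W' * B ∧ F' = B * F := by
  classical
  have := Fintype.ofFinite n
  obtain ⟨G, hG⟩ := exists_mul_eq_one_of_vecMul_injective hF
  set B := F' * G with hB
  have hWB : W = W' * B := by rw [hB, ← Matrix.mul_assoc, h, Matrix.mul_assoc, hG, Matrix.mul_one]
  have hBinj : Function.Injective B.mulVec := by
    refine Function.Injective.of_comp (f := W'.mulVec) ?_
    simpa only [Function.comp_def, mulVec_mulVec, ← hWB] using hW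
  have hBdet : IsUnit B.det := (isUnit_iff_isUnit_det B).1 (mulVec_injective_iff_isUnit.1 hBinj)
  have hF' : B⁻¹ * F' = F := by
    refine eq_of_mul_eq_mul_of_mulVec_injective hW ?_
    rw [← Matrix.mul_assoc, hWB, mul_nonsing_inv_cancel_right _ _ hBdet, h, hWB]
  exact ⟨B, hWB, by rw [← hF', mul_nonsing_inv_cancel_left _ _ hBdet]⟩

lemma det_mul_mul_transpose_self [CommRing R] [DecidableEq m] [Fintype n]
    (B : Matrix m m R) (F : Matrix m n R) :
    (B * F * (B * F)ᵀ).det = B.det ^ 2 * (F * Fᵀ).det := by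
  rw [transpose_mul, Matrix.mul_assoc, ← Matrix.mul_assoc F, ← Matrix.mul_assoc, det_mul, det_mul,
    det_transpose]
  ring

lemma one_le_abs_det_of_det_mul_transpose_le [DecidableEq m] [Fintype n]
    {B : Matrix m m ℝ} {F : Matrix m n ℝ} (hF : Function.Injective F.vecMul)
    (h : (F * Fᵀ).det ≤ (B * F * (B * F)ᵀ).det) : 1 ≤ |B.det| := by
  have hpos : 0 < (F * Fᵀ).det := (PosDef.mul_conjTranspose_self F hF).det_pos
  rw [det_mul_mul_transpose_self] at h
  exact (one_le_sq_iff_one_le_abs _).1 (le_of_mul_le_mul_right (by rwa [one_mul]) hpos)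

lemma one_vecMul_eq_one_iff [NonAssocSemiring R] {A : Matrix m n R} :
    1 ᵥ* A = 1 ↔ ∀ j, ∑ i, A i j = 1 := by
  simp only [funext_iff, vecMul, one_dotProduct, Pi.one_apply]

end LinearAlgebra

section ArithmeticGeometricMean

variable {n : Type*} [Fintype n]

lemma eq_one_of_sum_le_card_of_one_le_prod {x : n → ℝ} (hx : ∀ i, 0 ≤ x i)
    (hsum : ∑ i, x i ≤ Fintype.card n) (hprod : 1 ≤ ∏ i, x i) : x = 1 := by
  have hne : ∀ i ∈ Finset.univ, x i ≠ 0 :=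
    Finset.prod_ne_zero_iff.1 (zero_lt_one.trans_le hprod).ne'
  have hpos (i) : 0 < x i := (hx i).lt_of_ne' (hne i (Finset.mem_univ i))
  have hlog : 0 ≤ ∑ i, Real.log (x i) := by
    rw [← Real.log_prod hne]
    exact Real.log_nonneg hprod
  have hgap : ∀ i ∈ Finset.univ, 0 ≤ x i - 1 - Real.log (x i) := fun i _ =>
    sub_nonneg.2 (Real.log_le_sub_one_of_pos (hpos i))
  have hgap_sum : ∑ i, (x i - 1 - Real.log (x i)) ≤ 0 := by
    rw [Finset.sum_sub_distrib, Finset.sum_sub_distrib, Finset.sum_const, Finset.card_univ,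
      nsmul_one]
    linarith
  have hgap_zero := (Finset.sum_eq_zero_iff_of_nonneg hgap).1
    (hgap_sum.antisymm (Finset.sum_nonneg hgap))
  ext i
  by_contra hi
  exact (sub_pos.2 (Real.log_lt_sub_one_of_pos (hpos i) hi)).ne' (hgap_zero i (Finset.mem_univ i))

lemma eq_one_of_posSemidef_of_trace_le_card_of_one_le_det [DecidableEq n] {A : Matrix n n ℝ}
    (hA : A.PosSemidef) (htrace : A.trace ≤ Fintype.card n) (hdet : 1 ≤ A.det) : A = 1 := by
  have heig : hA.1.eigenvalues = 1 :=
    eq_one_of_sum_le_card_of_one_le_prod hA.eigenvalues_nonneg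
      (hA.1.trace_eq_sum_eigenvalues ▸ htrace) (hA.1.det_eq_prod_eigenvalues ▸ hdet)
  rw [hA.1.spectral_theorem, heig]
  have hone : diagonal (RCLike.ofReal ∘ 1 : n → ℝ) = 1 := diagonal_one
  rw [hone, map_one]

end ArithmeticGeometricMean

section EuclideanNorm

variable {m : Type*} [Fintype m] (x : m → ℝ)

lemma l2norm_eq_norm_toLp : l2norm x = ‖WithLp.toLp 2 x‖ := by
  simp only [l2norm, EuclideanSpace.norm_eq, Real.norm_eq_abs, sq_abs]

lemma l2norm_nonneg : 0 ≤ l2norm x := Real.sqrt_nonneg _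

lemma l2norm_neg : l2norm (-x) = l2norm x := by
  simp only [l2norm, Pi.neg_apply, neg_sq]

lemma l2norm_eq_zero_iff {x : m → ℝ} : l2norm x = 0 ↔ x = 0 := by
  rw [l2norm_eq_norm_toLp, norm_eq_zero, WithLp.toLp_eq_zero]

lemma l2norm_sq : l2norm x ^ 2 = ∑ i, x i ^ 2 :=
  Real.sq_sqrt (Finset.sum_nonneg fun i _ => sq_nonneg (x i))

lemma le_l2norm (i : m) : x i ≤ l2norm x := by
  rw [l2norm_eq_norm_toLp]
  exact (le_abs_self _).trans (PiLp.norm_apply_le (WithLp.toLp 2 x) i)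

lemma abs_det_le_prod_l2norm {n : ℕ} (A : Matrix (Fin n) (Fin n) ℝ) :
    |A.det| ≤ ∏ i, l2norm (A i) := by
  let b := EuclideanSpace.basisFun (Fin n) ℝ
  let v : Fin n → EuclideanSpace ℝ (Fin n) := fun i => WithLp.toLp 2 (A i)
  have : Fact (Module.finrank ℝ (EuclideanSpace ℝ (Fin n)) = n) := ⟨finrank_euclideanSpace_fin⟩
  have hdet : b.toBasis.det v = A.det := by
    rw [Module.Basis.det_apply, ← det_transpose A]
    rfl
  calc |A.det| = |b.toBasis.orientation.volumeForm v| := by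
        rw [b.toBasis.orientation.volumeForm_robust' b, hdet]
    _ ≤ ∏ i, ‖v i‖ := b.toBasis.orientation.abs_volumeForm_apply_le v
    _ = ∏ i, l2norm (A i) := by simp only [v, l2norm_eq_norm_toLp]

end EuclideanNorm

section SufficientlyScattered

variable {K : ℕ} {J : Type*} [Fintype J]

lemma l2norm_sub_mem_socC (b : Fin K → ℝ) : (fun i => l2norm b - b i) ∈ socC K := by
  rcases K.eq_zero_or_pos with rfl | hK
  · simp [socC, l2norm]
  have hK1 : (0 : ℝ) ≤ K - 1 := sub_nonneg.2 (Nat.one_le_cast.2 hK)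
  have hsum : ∑ i, (l2norm b - b i) = K * l2norm b - ∑ i, b i := by simp
  have hsum_nonneg : 0 ≤ ∑ i, (l2norm b - b i) :=
    Finset.sum_nonneg fun i _ => sub_nonneg.2 (le_l2norm b i)
  have hsum_sq : ∑ i, (l2norm b - b i) ^ 2 =
      (K + 1) * l2norm b ^ 2 - 2 * l2norm b * ∑ i, b i := by
    simp only [sub_sq, Finset.sum_add_distrib, Finset.sum_sub_distrib, ← Finset.mul_sum,
      ← l2norm_sq b, Finset.sum_const, Finset.card_univ, Fintype.card_fin, nsmul_eq_mul]
    ring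
  change √((K : ℝ) - 1) * √(∑ i, (l2norm b - b i) ^ 2) ≤ ∑ i, (l2norm b - b i)
  rw [← Real.sqrt_mul hK1]
  refine Real.sqrt_le_iff.2 ⟨hsum_nonneg, ?_⟩
  rw [hsum_sq, hsum]
  -- The two sides differ by exactly `(l2norm b - ∑ i, b i) ^ 2`.
  linarith [sq_nonneg (l2norm b - ∑ i, b i)]

-- Testing `b` against the single vector `l2norm b • 1 - b` of the cone suffices.
lemma l2norm_le_sum_of_forall_mem_socC {b : Fin K → ℝ} (hb : ∀ x ∈ socC K, 0 ≤ b ⬝ᵥ x) :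
    l2norm b ≤ ∑ i, b i := by
  rcases (l2norm_nonneg b).eq_or_lt' with hzero | hpos
  · simp [l2norm_eq_zero_iff.1 hzero, l2norm]
  have hdot : b ⬝ᵥ (fun i => l2norm b - b i) = l2norm b * (∑ i, b i - l2norm b) := by
    simp only [dotProduct, mul_sub, Finset.sum_sub_distrib, ← Finset.sum_mul, ← sq, l2norm_sq,
      mul_comm]
  have hmul_nonneg := hdot ▸ hb _ (l2norm_sub_mem_socC b)
  exact sub_nonneg.1 (nonneg_of_mul_nonneg_right hmul_nonneg hpos)

lemma vecMul_injective_of_socC_subset_coneOf {H : Matrix (Fin K) J ℝ}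
    (hH : socC K ⊆ coneOf H) : Function.Injective H.vecMul := by
  have hle {b : Fin K → ℝ} (hb : b ᵥ* H = 0) : l2norm b ≤ ∑ i, b i := by
    refine l2norm_le_sum_of_forall_mem_socC fun x hx => ?_
    obtain ⟨θ, -, rfl⟩ := hH hx
    rw [dotProduct_mulVec, hb, zero_dotProduct]
  refine (injective_iff_map_eq_zero H.vecMulLinear).2 fun b (hb : b ᵥ* H = 0) => ?_
  have hneg : l2norm b ≤ -∑ i, b i := by
    simpa only [l2norm_neg, Pi.neg_apply, Finset.sum_neg_distrib] using
      hle (b := -b) (by rw [neg_vecMul, hb, neg_zero])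
  exact l2norm_eq_zero_iff.1 (by linarith [hle hb, l2norm_nonneg b])

lemma l2norm_row_le_sum_of_mul_nonneg {B : Matrix (Fin K) (Fin K) ℝ} {F : Matrix (Fin K) J ℝ}
    (hF : socC K ⊆ coneOf F) (hBF : ∀ k j, 0 ≤ (B * F) k j) (k : Fin K) :
    l2norm (B k) ≤ ∑ i, B k i := by
  refine l2norm_le_sum_of_forall_mem_socC fun x hx => ?_
  obtain ⟨θ, hθ, rfl⟩ := hF hx
  rw [dotProduct_mulVec]
  exact dotProduct_nonneg_of_nonneg (hBF k) hθ

lemma mul_transpose_self_eq_one_of_l2norm_row_le_sum {B : Matrix (Fin K) (Fin K) ℝ}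
    (hcol : ∀ j, ∑ i, B i j = 1) (hrow : ∀ i, l2norm (B i) ≤ ∑ j, B i j)
    (hdet : 1 ≤ |B.det|) : B * Bᵀ = 1 := by
  have hsum : ∑ i, ∑ j, B i j = K := Finset.sum_comm.trans (by simp [hcol])
  have hprod : 1 ≤ ∏ i, ∑ j, B i j :=
    hdet.trans <| (abs_det_le_prod_l2norm B).trans <|
      Finset.prod_le_prod (fun i _ => l2norm_nonneg (B i)) fun i _ => hrow i
  have hrow_sum : (fun i => ∑ j, B i j) = 1 :=
    eq_one_of_sum_le_card_of_one_le_prod (fun i => (l2norm_nonneg (B i)).trans (hrow i))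
      (by rw [hsum, Fintype.card_fin]) hprod
  have hdiag (i) : (B * Bᵀ) i i ≤ 1 := by
    have hnorm : l2norm (B i) ≤ 1 := (hrow i).trans_eq (congrFun hrow_sum i)
    calc (B * Bᵀ) i i = l2norm (B i) ^ 2 := by
          rw [l2norm_sq, mul_apply]
          simp only [transpose_apply, sq]
      _ ≤ 1 := pow_le_one₀ (l2norm_nonneg _) hnorm
  refine eq_one_of_posSemidef_of_trace_le_card_of_one_le_det
    (posSemidef_self_mul_conjTranspose B) ?_ ?_
  · simpa [trace] using Finset.sum_le_sum fun i (_ : i ∈ Finset.univ) => hdiag i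
  · rw [det_mul, det_transpose, ← sq]
    exact (one_le_sq_iff_one_le_abs _).2 hdet

lemma SSC.isPermMatrix_transpose {B : Matrix (Fin K) (Fin K) ℝ} {F : Matrix (Fin K) J ℝ}
    (hF : SSC F) (hB : B * Bᵀ = 1) (hBF : ∀ k j, 0 ≤ (B * F) k j) : IsPermMatrix Bᵀ := by
  have hcone : coneOf F ⊆ coneOf Bᵀ := by
    rintro _ ⟨θ, hθ, rfl⟩
    refine ⟨(B * F) *ᵥ θ, fun k => dotProduct_nonneg_of_nonneg (hBF k) hθ, ?_⟩
    rw [mulVec_mulVec, ← Matrix.mul_assoc, mul_eq_one_comm.1 hB, Matrix.one_mul]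
  by_contra hperm
  exact hF.2 Bᵀ (by rwa [transpose_transpose]) hperm hcone

end SufficientlyScattered

theorem stmt7_general {L N : Type*} [Fintype N] {K : ℕ}
    (Wn : Matrix L (Fin K) ℝ) (Fn : Matrix (Fin K) N ℝ)
    (hWrank : Wn.rank = K) (hFn1 : ∀ n, ∑ k, Fn k n = 1) (hFnssc : SSC Fn)
    (W : Matrix L (Fin K) ℝ) (F : Matrix (Fin K) N ℝ)
    (hF0 : ∀ k n, 0 ≤ F k n) (hF1 : ∀ n, ∑ k, F k n = 1)
    (hfeas : W * F = Wn * Fn) (hvol : (Fn * Fnᵀ).det ≤ (F * Fᵀ).det) :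
    ∃ Pm : Matrix (Fin K) (Fin K) ℝ, IsPermMatrix Pm ∧ W = Wn * Pm ∧ F = Pmᵀ * Fn := by
  have hWinj : Function.Injective Wn.mulVec :=
    mulVec_injective_of_rank_eq_card (by rw [hWrank, Fintype.card_fin])
  have hFinj : Function.Injective Fn.vecMul := vecMul_injective_of_socC_subset_coneOf hFnssc.1
  obtain ⟨B, rfl, rfl⟩ := exists_eq_mul_of_mul_eq_mul hWinj hFinj hfeas
  have hcol : 1 ᵥ* B = 1 := by
    refine hFinj ?_
    change 1 ᵥ* B ᵥ* Fn = 1 ᵥ* Fn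
    rw [vecMul_vecMul, one_vecMul_eq_one_iff.2 hF1, one_vecMul_eq_one_iff.2 hFn1]
  have horth : B * Bᵀ = 1 :=
    mul_transpose_self_eq_one_of_l2norm_row_le_sum (one_vecMul_eq_one_iff.1 hcol)
      (l2norm_row_le_sum_of_mul_nonneg hFnssc.1 hF0)
      (one_le_abs_det_of_det_mul_transpose_le hFinj hvol)
  exact ⟨Bᵀ, hFnssc.isPermMatrix_transpose horth hF0,
    by rw [Matrix.mul_assoc, horth, Matrix.mul_one], by rw [transpose_transpose]⟩

theorem stmt7 {L N K : ℕ}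
    (Wn : Matrix (Fin L) (Fin K) ℝ) (Fn : Matrix (Fin K) (Fin N) ℝ)
    (hWrank : Wn.rank = K)
    (hFn0 : ∀ k n, 0 ≤ Fn k n) (hFn1 : ∀ n, ∑ k, Fn k n = 1)
    (hFnrank : Fn.rank = K) (hFnssc : SSC Fn)
    (Wstar : Matrix (Fin L) (Fin K) ℝ) (Fstar : Matrix (Fin K) (Fin N) ℝ)
    (hFstar0 : ∀ k n, 0 ≤ Fstar k n) (hFstar1 : ∀ n, ∑ k, Fstar k n = 1)
    (hfeas : Wstar * Fstar = Wn * Fn)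
    (hopt : ∀ (W : Matrix (Fin L) (Fin K) ℝ) (F : Matrix (Fin K) (Fin N) ℝ),
      (∀ k n, 0 ≤ F k n) → (∀ n, ∑ k, F k n = 1) → W * F = Wn * Fn →
      (F * Fᵀ).det ≤ (Fstar * Fstarᵀ).det) :
    ∃ Pm : Matrix (Fin K) (Fin K) ℝ,
      IsPermMatrix Pm ∧ Wstar = Wn * Pm ∧ Fstar = Pmᵀ * Fn := by
  exact stmt7_general Wn Fn hWrank hFn1 hFnssc Wstar Fstar hFstar0 hFstar1 hfeas
    (hopt Wn Fn hFn0 hFn1 rfl)
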